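/- arXiv:1603.09263 — 5 statements merged into one kernel-verified Lean document; each statement's English description precedes it below -/
import Mathlib

section
/- Let Λ ⊂ ℂ^d be a full-rank lattice and let Σ be a Hermitian positive-definite d×d complex matrix. Then for every c ∈ ℂ^d one has ∑_{λ∈Λ} exp(−(λ−c)†Σ^{-1}(λ−c)) ≤ ∑_{λ∈Λ} exp(−λ†Σ^{-1}λ); consequently the supremum over c ∈ ℂ^d of ∑_{λ∈Λ} exp(−(λ−c)†Σ^{-1}(λ−c)) equals ∑_{λ∈Λ} exp(−λ†Σ^{-1}λ), i.e. the maximum of the Λ-periodic Gaussian sum is attained at the lattice points. -/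
open Matrix
open scoped ComplexOrder

namespace GaussLat

universe u

variable {V : Type u} [NormedAddCommGroup V] [NormedSpace ℝ V] [FiniteDimensional ℝ V]

/-- Summability of the Gaussian over a lattice. -/
lemma summable_base (L : Submodule ℤ V) [DiscreteTopology L] (s : ℝ) (hs : 0 < s) :
    Summable fun x : L => Real.exp (-(s * ‖(x : V)‖ ^ 2)) := by
  set n := Module.finrank ℤ L + 1 with hn
  have h1 : Summable fun x : L => ‖x‖⁻¹ ^ (2 * n) := by
    have := ZLattice.summable_norm_pow_inv L (2 * n) (by omega)
    simpa using this
  refine Summable.of_norm_bounded_eventually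
    (g := fun x : L => (n.factorial / s ^ n : ℝ) * ‖x‖⁻¹ ^ (2 * n)) (h1.mul_left _) ?_
  filter_upwards [(Set.finite_singleton (0 : L)).compl_mem_cofinite] with x hx
  have hx0 : x ≠ 0 := by simpa using hx
  have hr : 0 < ‖x‖ := norm_pos_iff.mpr hx0
  have h2 := Real.pow_div_factorial_le_exp (s * ‖x‖ ^ 2) (by positivity) n
  rw [Real.norm_of_nonneg (Real.exp_pos _).le, Real.exp_neg]
  have h3 : (Real.exp (s * ‖x‖ ^ 2))⁻¹ ≤ ((s * ‖x‖ ^ 2) ^ n / n.factorial)⁻¹ :=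
    inv_anti₀ (by positivity) h2
  refine h3.trans (le_of_eq ?_)
  rw [mul_pow, ← pow_mul, inv_pow]
  field_simp

variable {Q : V → ℝ}

lemma half_bound (hpar : ∀ x y, Q (x + y) + Q (x - y) = 2 * Q x + 2 * Q y)
    (h0 : ∀ x, 0 ≤ Q x) (x c : V) : Q x / 2 - Q c ≤ Q (x - c) := by
  have h1 := hpar (x - c) c
  have h2 := h0 (x - c - c)
  rw [sub_add_cancel] at h1
  linarith

lemma summable_shift (L : Submodule ℤ V) [DiscreteTopology L]
    (hpar : ∀ x y, Q (x + y) + Q (x - y) = 2 * Q x + 2 * Q y)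
    {a : ℝ} (ha : 0 < a) (hlow : ∀ x, a * ‖x‖ ^ 2 ≤ Q x) (t : ℝ) (ht : 0 < t) (c : V) :
    Summable fun x : L => Real.exp (-(t * Q (x - c))) := by
  have h0 : ∀ x, 0 ≤ Q x := fun x => le_trans (by positivity) (hlow x)
  refine Summable.of_nonneg_of_le (fun _ => (Real.exp_pos _).le) (fun x => ?_)
    ((summable_base L (t * a / 2) (by positivity)).mul_left (Real.exp (t * Q c)))
  rw [← Real.exp_add]
  apply Real.exp_le_exp.mpr
  have h1 := mul_le_mul_of_nonneg_left (half_bound hpar h0 x c) ht.le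
  have h2 := mul_le_mul_of_nonneg_left (hlow x) ht.le
  nlinarith

/-- Uniform boundedness of the periodic Gaussian sum. -/
lemma bounded (L : Submodule ℤ V) [DiscreteTopology L] [IsZLattice ℝ L]
    (hpar : ∀ x y, Q (x + y) + Q (x - y) = 2 * Q x + 2 * Q y) (hcont : Continuous Q)
    {a : ℝ} (ha : 0 < a) (hlow : ∀ x, a * ‖x‖ ^ 2 ≤ Q x) :
    ∃ M, ∀ c : V, ∑' x : L, Real.exp (-(Q (x - c))) ≤ M := by
  have h0 : ∀ x, 0 ≤ Q x := fun x => le_trans (by positivity) (hlow x)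
  have : ProperSpace V := FiniteDimensional.proper_real V
  have hfin : Module.Finite ℤ L := ZLattice.module_finite ℝ L
  have hfree : Module.Free ℤ L := ZLattice.module_free ℝ L
  let b := (Module.Free.chooseBasis ℤ L).ofZLatticeBasis ℝ L
  have hb : Submodule.span ℤ (Set.range b) = L :=
    (Module.Free.chooseBasis ℤ L).ofZLatticeBasis_span ℝ
  obtain ⟨C, hC⟩ := (isCompact_closedBall (0 : V) (∑ i, ‖b i‖)).bddAbove_image hcont.continuousOn
  have hsum : ∀ c : V, Summable fun x : L => Real.exp (-(Q (x - c))) := fun c => by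
    simpa using summable_shift L hpar ha hlow 1 one_pos c
  have hsum2 : Summable fun x : L => Real.exp (-(1 / 2 * Q x)) := by
    simpa using summable_shift L hpar ha hlow (1 / 2) (by norm_num) 0
  refine ⟨Real.exp C * ∑' x : L, Real.exp (-(1 / 2 * Q x)), fun c => ?_⟩
  have hl : (ZSpan.floor b c : V) ∈ L :=
    hb.le (ZSpan.floor b c).2
  have hper : ∑' x : L, Real.exp (-(Q (x - c))) =
      ∑' x : L, Real.exp (-(Q (x - ZSpan.fract b c))) := by
    rw [← (Equiv.addRight (⟨_, hl⟩ : L)).tsum_eq]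
    refine tsum_congr fun x => ?_
    congr 3
    simp only [Equiv.coe_addRight, Submodule.coe_add, ZSpan.fract_apply]
    abel
  rw [hper, ← tsum_mul_left]
  refine (hsum _).tsum_le_tsum (fun x => ?_) (hsum2.mul_left _)
  rw [← Real.exp_add]
  apply Real.exp_le_exp.mpr
  have h1 := half_bound hpar h0 x (ZSpan.fract b c)
  have h2 : Q (ZSpan.fract b c) ≤ C := by
    apply hC
    refine ⟨_, ?_, rfl⟩
    simpa using ZSpan.norm_fract_le b c
  linarith

/-- Key reindexing. -/
lemma exists_equiv (L : Submodule ℤ V) :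
    ∃ (K : Type u) (s : K → L) (e : K × (L × L) ≃ L × L), ∀ k x y,
      e (k, (x, y)) = (s k + x + y, y - x) := by
  let D : AddSubgroup L := (zsmulAddGroupHom (2 : ℤ) : L →+ L).range
  let s : L ⧸ D → L := Quotient.out
  have hs : ∀ k : L ⧸ D, (QuotientAddGroup.mk (s k) : L ⧸ D) = k := fun k => Quotient.out_eq k
  let f : (L ⧸ D) × (L × L) → L × L := fun p => (s p.1 + p.2.1 + p.2.2, p.2.2 - p.2.1)
  have hD : ∀ z : L, z ∈ D ↔ ∃ w : L, (2 : ℤ) • w = z := fun z => Iff.rfl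
  have h2 : ∀ x y : L, (2 : ℤ) • x = (2 : ℤ) • y → x = y := by
    intro x y h
    have h' : (2 : ℤ) • (x : V) = (2 : ℤ) • (y : V) := by exact_mod_cast congrArg Subtype.val h
    apply Subtype.ext
    have h3 : (2 : ℝ) • (x : V) = (2 : ℝ) • (y : V) := by
      simpa [two_smul] using h'
    exact smul_right_injective V (two_ne_zero' ℝ) h3
  have hf : Function.Bijective f := by
    constructor
    · rintro ⟨k, x, y⟩ ⟨k', x', y'⟩ h
      simp only [f, Prod.mk.injEq] at h
      obtain ⟨ha, hb⟩ := h
      have hd : s k + (2 : ℤ) • x = s k' + (2 : ℤ) • x' := by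
        have : (s k + x + y) - (y - x) = (s k' + x' + y') - (y' - x') := by rw [ha, hb]
        rw [two_smul, two_smul]
        calc _ = (s k + x + y) - (y - x) := by abel
          _ = _ := this
          _ = _ := by abel
      have hk : k = k' := by
        rw [← hs k, ← hs k', QuotientAddGroup.eq, hD]
        refine ⟨x - x', ?_⟩
        rw [smul_sub, sub_eq_iff_eq_add, neg_add_eq_sub, sub_add_eq_add_sub, ← hd]
        abel
      subst hk
      have hx : x = x' := h2 _ _ (add_left_cancel hd)
      subst hx
      simpa using hb
    · rintro ⟨l, m⟩
      have : -s (QuotientAddGroup.mk (l - m)) + (l - m) ∈ D := by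
        rw [← QuotientAddGroup.eq, hs]
      obtain ⟨w, hw⟩ := (hD _).1 this
      refine ⟨(QuotientAddGroup.mk (l - m), (w, w + m)), ?_⟩
      rw [two_smul] at hw
      simp only [f, Prod.mk.injEq]
      refine ⟨?_, by abel⟩
      have hww : l = s (QuotientAddGroup.mk (l - m)) + (w + w) + m := by rw [hw]; abel
      conv_rhs => rw [hww]
      abel
  exact ⟨L ⧸ D, s, Equiv.ofBijective f hf, fun k x y => rfl⟩

lemma main_ineq (L : Submodule ℤ V) [DiscreteTopology L]
    (hpar : ∀ x y, Q (x + y) + Q (x - y) = 2 * Q x + 2 * Q y)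
    {a : ℝ} (ha : 0 < a) (hlow : ∀ x, a * ‖x‖ ^ 2 ≤ Q x) (c : V) :
    2 * (∑' x : L, Real.exp (-(Q (x - c)))) ^ 2 ≤
      (∑' x : L, Real.exp (-(Q x))) ^ 2 +
      (∑' x : L, Real.exp (-(Q (x - (2 : ℝ) • c)))) * ∑' x : L, Real.exp (-(Q x)) := by
  have hsum : ∀ c : V, Summable fun x : L => Real.exp (-(Q (x - c))) := fun c => by
    simpa using summable_shift L hpar ha hlow 1 one_pos c
  obtain ⟨K, s, e, he⟩ := exists_equiv L
  let g : V → K → ℝ := fun c k => ∑' x : L, Real.exp (-(1 / 2 * Q (s k + x + x - c)))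
  have hg : ∀ c k, Summable fun x : L => Real.exp (-(1 / 2 * Q (s k + x + x - c))) := by
    intro c k
    have h := summable_shift L hpar ha hlow (1 / 2) (by norm_num) c
    have hinj : Function.Injective fun x : L => s k + x + x := by
      intro x y hxy
      have h' : (s k : V) + x + x = s k + y + y := by exact_mod_cast congrArg Subtype.val hxy
      apply Subtype.ext
      have h3 : (2 : ℝ) • (x : V) = (2 : ℝ) • (y : V) := by
        rw [add_assoc, add_assoc] at h'
        simpa [two_smul] using h'
      exact smul_right_injective V (two_ne_zero' ℝ) h3
    refine (h.comp_injective hinj).congr fun x => ?_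
    simp only [Function.comp, Submodule.coe_add]
  -- general product formula
  have key : ∀ u v : V, HasSum (fun k => g (u - v) k * g (u + v) k)
      ((∑' x : L, Real.exp (-(Q (x - u)))) * ∑' x : L, Real.exp (-(Q (x - v)))) := by
    intro u v
    have hp := (hsum u).mul_of_nonneg (hsum v) (fun _ => (Real.exp_pos _).le)
      (fun _ => (Real.exp_pos _).le)
    have hH := hp.hasSum
    rw [← (hsum u).tsum_mul_tsum (hsum v) hp, ← e.hasSum_iff] at hH
    refine hH.prod_fiberwise fun k => ?_
    have hpk := (hg (u - v) k).mul_of_nonneg (hg (u + v) k) (fun _ => (Real.exp_pos _).le)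
      (fun _ => (Real.exp_pos _).le)
    have hHk := hpk.hasSum
    rw [← (hg (u - v) k).tsum_mul_tsum (hg (u + v) k) hpk] at hHk
    refine hHk.congr_fun ?_ |> fun h => h
    rintro ⟨x, y⟩
    simp only [Function.comp, he]
    rw [← Real.exp_add, ← Real.exp_add]
    congr 1
    have h := hpar ((s k + x + y : L) - u : V) ((y - x : L) - v : V)
    have e1 : ((s k + x + y : L) - u : V) + ((y - x : L) - v : V) = s k + y + y - (u + v) := by
      push_cast; abel
    have e2 : ((s k + x + y : L) - u : V) - ((y - x : L) - v : V) = s k + x + x - (u - v) := by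
      push_cast; abel
    rw [e1, e2] at h
    linarith
  have k1 := key c c
  have k2 := key 0 0
  have k3 := key ((2 : ℝ) • c) 0
  rw [sub_self, ← two_smul ℝ c] at k1
  simp only [sub_zero, add_zero] at k2 k3
  have := hasSum_le (fun k => ?_) (k1.mul_left 2) (k2.add k3)
  · rw [pow_two, pow_two]; exact this
  · nlinarith [sq_nonneg (g 0 k - g ((2 : ℝ) • c) k)]

lemma main_le (L : Submodule ℤ V) [DiscreteTopology L] [IsZLattice ℝ L]
    (hpar : ∀ x y, Q (x + y) + Q (x - y) = 2 * Q x + 2 * Q y) (hcont : Continuous Q)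
    {a : ℝ} (ha : 0 < a) (hlow : ∀ x, a * ‖x‖ ^ 2 ≤ Q x) (c : V) :
    ∑' x : L, Real.exp (-(Q (x - c))) ≤ ∑' x : L, Real.exp (-(Q x)) := by
  obtain ⟨M, hM⟩ := bounded L hpar hcont ha hlow
  have hineq := main_ineq L hpar ha hlow
  have hS0 : Summable fun x : L => Real.exp (-(Q x)) := by
    simpa using summable_shift L hpar ha hlow 1 one_pos 0
  have hpos : 0 < ∑' x : L, Real.exp (-(Q x)) :=
    hS0.tsum_pos (fun _ => (Real.exp_pos _).le) 0 (Real.exp_pos _)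
  set f : V → ℝ := fun c => ∑' x : L, Real.exp (-(Q (x - c))) with hf
  set A := ∑' x : L, Real.exp (-(Q x)) with hA
  change f c ≤ A
  have hfn : ∀ c, 0 ≤ f c := fun c => tsum_nonneg fun _ => (Real.exp_pos _).le
  have hbdd : BddAbove (Set.range f) := ⟨M, by rintro _ ⟨c, rfl⟩; exact hM c⟩
  have hle : ∀ c, f c ≤ ⨆ c, f c := fun c => le_ciSup hbdd c
  set B := ⨆ c, f c with hB
  have hB0 : 0 ≤ B := (hfn c).trans (hle c)
  have h1 : ∀ c, f c ≤ Real.sqrt ((A ^ 2 + B * A) / 2) := by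
    intro c
    apply Real.le_sqrt_of_sq_le
    have h2 : 2 * f c ^ 2 ≤ A ^ 2 + f ((2 : ℝ) • c) * A := hineq c
    have := mul_le_mul_of_nonneg_right (hle ((2 : ℝ) • c)) hpos.le
    linarith
  have h2 : B ≤ Real.sqrt ((A ^ 2 + B * A) / 2) := ciSup_le h1
  have h3 : B ^ 2 ≤ (A ^ 2 + B * A) / 2 := by
    rwa [Real.le_sqrt hB0 (by positivity)] at h2
  refine (hle c).trans ?_
  by_contra hlt
  push Not at hlt
  nlinarith

end GaussLat

/-- **The Λ-periodic Gaussian sum is maximized at lattice points.**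
For a full-rank lattice `Λ ⊂ ℂ^d` and a Hermitian positive-definite matrix `Σ`,
for every `c ∈ ℂ^d` one has
`∑_{λ∈Λ} exp(−(λ−c)†Σ⁻¹(λ−c)) ≤ ∑_{λ∈Λ} exp(−λ†Σ⁻¹λ)`, and consequently the
supremum over `c` of the left-hand side equals the right-hand side. -/
theorem gaussian_lattice_sum_le_center
    (d : ℕ)
    (L : Submodule ℤ (Fin d → ℂ)) [DiscreteTopology L]
    (hfull : Submodule.span ℝ (L : Set (Fin d → ℂ)) = ⊤)
    (S : Matrix (Fin d) (Fin d) ℂ) (hS : S.PosDef) :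
    (∀ c : Fin d → ℂ,
      (∑' x : L, Real.exp (-(star ((x : Fin d → ℂ) - c) ⬝ᵥ S⁻¹ *ᵥ ((x : Fin d → ℂ) - c)).re)) ≤
        ∑' x : L, Real.exp (-(star (x : Fin d → ℂ) ⬝ᵥ S⁻¹ *ᵥ (x : Fin d → ℂ)).re)) ∧
    (⨆ c : Fin d → ℂ,
      ∑' x : L, Real.exp (-(star ((x : Fin d → ℂ) - c) ⬝ᵥ S⁻¹ *ᵥ ((x : Fin d → ℂ) - c)).re)) =
      ∑' x : L, Real.exp (-(star (x : Fin d → ℂ) ⬝ᵥ S⁻¹ *ᵥ (x : Fin d → ℂ)).re) := by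
  let Q : (Fin d → ℂ) → ℝ := fun x => (star x ⬝ᵥ S⁻¹ *ᵥ x).re
  have hpar : ∀ x y, Q (x + y) + Q (x - y) = 2 * Q x + 2 * Q y := by
    intro x y
    simp only [Q, star_add, star_sub, mulVec_add, mulVec_sub, add_dotProduct, sub_dotProduct,
      dotProduct_add, dotProduct_sub, Complex.add_re, Complex.sub_re]
    ring
  have hcont : Continuous Q := by
    refine Complex.continuous_re.comp ?_
    exact (continuous_star).dotProduct (continuous_const.matrix_mulVec continuous_id)
  have hpos : ∀ x, x ≠ 0 → 0 < Q x := fun x hx =>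
    (Complex.pos_iff.mp (hS.inv.dotProduct_mulVec_pos hx)).1
  have hhom : ∀ (r : ℝ) x, Q (r • x) = r ^ 2 * Q x := by
    intro r x
    have : r • x = (r : ℂ) • x := by ext i; simp
    simp only [Q, this, star_smul, mulVec_smul, smul_dotProduct, dotProduct_smul]
    simp
    ring
  obtain ⟨a, ha, hal⟩ := (isCompact_sphere (0 : Fin d → ℂ) 1).exists_forall_le'
    hcont.continuousOn (a := 0) (fun x hx => hpos x (by
      rintro rfl
      simp at hx))
  have hlow : ∀ x, a * ‖x‖ ^ 2 ≤ Q x := by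
    intro x
    rcases eq_or_ne x 0 with rfl | hx
    · simp [Q]
    have hn : 0 < ‖x‖ := norm_pos_iff.mpr hx
    have h1 := hal (‖x‖⁻¹ • x) (by simp [norm_smul, hn.ne'])
    rw [hhom, inv_pow, ← div_eq_inv_mul, le_div_iff₀ (by positivity)] at h1
    exact h1
  have : IsZLattice ℝ L := ⟨hfull⟩
  have hmain : ∀ c, ∑' x : L, Real.exp (-(Q (x - c))) ≤ ∑' x : L, Real.exp (-(Q x)) :=
    GaussLat.main_le L hpar hcont ha hlow
  refine ⟨hmain, le_antisymm (ciSup_le hmain) ?_⟩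
  have := le_ciSup (f := fun c => ∑' x : L, Real.exp (-(Q (x - c))))
    ⟨_, by rintro _ ⟨c, rfl⟩; exact hmain c⟩ 0
  simpa only [sub_zero] using this
end

section
/- Let Λ ⊂ ℂ^m be a full-rank lattice with covolume V(Λ), let c ∈ ℂ^m, and let Σ₁, Σ₂ be Hermitian positive-definite m×m complex matrices. Set Σ₀ = Σ₁ + Σ₂ and Σ₃ = (Σ₁^{-1} + Σ₂^{-1})^{-1}, and write f_{√Σ}(x) = π^{-m} det(Σ)^{-1} exp(−x†Σ^{-1}x). Suppose the flatness factor ε_Λ(√Σ₃) := sup_{x∈ℂ^m} | V(Λ) · ∑_{λ∈Λ} f_{√Σ₃}(x−λ) − 1 | satisfies ε_Λ(√Σ₃) ≤ ε for some ε ≤ 1/2. Define the discrete Gaussian weights D(λ) = f_{√Σ₁}(λ) / ∑_{λ'∈Λ+c} f_{√Σ₁}(λ') for λ ∈ Λ+c, and let g(x) = ∑_{λ∈Λ+c} D(λ) · f_{√Σ₂}(x−λ). Then for every x ∈ ℂ^m, (1−4ε)·f_{√Σ₀}(x) ≤ g(x) ≤ (1+4ε)·f_{√Σ₀}(x). -/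
open Matrix MeasureTheory
open scoped ComplexOrder

/-- The circularly-symmetric complex Gaussian density with covariance `S`:
`f_{√S}(x) = π^{-m} det(S)^{-1} exp(−x†S⁻¹x)`. -/
noncomputable def complexGaussianDensity (m : ℕ) (S : Matrix (Fin m) (Fin m) ℂ)
    (x : Fin m → ℂ) : ℝ :=
  (Real.pi ^ m * S.det.re)⁻¹ * Real.exp (-(star x ⬝ᵥ S⁻¹ *ᵥ x).re)


open scoped MatrixOrder in
lemma posDef_factor {m : ℕ} {A : Matrix (Fin m) (Fin m) ℂ} (hA : A.PosDef) :
    ∃ B : Matrix (Fin m) (Fin m) ℂ, IsUnit B.det ∧ A = Bᴴ * B := by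
  obtain ⟨B, rfl⟩ := CStarAlgebra.nonneg_iff_eq_star_mul_self.mp hA.posSemidef.nonneg
  refine ⟨B, ?_, rfl⟩
  have h := hA.det_pos.ne'
  rw [det_mul] at h
  exact (right_ne_zero_of_mul h).isUnit

lemma quad_factor {m : ℕ} (B : Matrix (Fin m) (Fin m) ℂ) (y : Fin m → ℂ) :
    (star y ⬝ᵥ (Bᴴ * B) *ᵥ y).re = ∑ i, ‖(B *ᵥ y) i‖ ^ 2 := by
  rw [← mulVec_mulVec, dotProduct_mulVec, ← star_mulVec]
  simp [dotProduct, Complex.sq_norm, Complex.normSq_apply]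

lemma quad_lower {m : ℕ} {A : Matrix (Fin m) (Fin m) ℂ} (hA : A.PosDef) :
    ∃ a : ℝ, 0 < a ∧ ∀ y : Fin m → ℂ, a * ‖y‖ ^ 2 ≤ (star y ⬝ᵥ A *ᵥ y).re := by
  obtain ⟨B, hB, rfl⟩ := posDef_factor hA
  let T := LinearMap.toContinuousLinearMap (Matrix.toLin' B⁻¹)
  have hT : ∀ y, T (B *ᵥ y) = y := by
    intro y
    simp [T, Matrix.toLin'_apply, mulVec_mulVec, Matrix.nonsing_inv_mul _ hB]
  refine ⟨((‖T‖ + 1) ^ 2)⁻¹, by positivity, fun y => ?_⟩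
  rw [quad_factor, inv_mul_le_iff₀ (by positivity)]
  have h1 : ‖y‖ ≤ (‖T‖ + 1) * ‖B *ᵥ y‖ := by
    calc ‖y‖ = ‖T (B *ᵥ y)‖ := by rw [hT]
      _ ≤ ‖T‖ * ‖B *ᵥ y‖ := T.le_opNorm _
      _ ≤ _ := by gcongr; linarith
  have h2 : ‖B *ᵥ y‖ ^ 2 ≤ ∑ i, ‖(B *ᵥ y) i‖ ^ 2 := by
    have hs : (0:ℝ) ≤ ∑ i, ‖(B *ᵥ y) i‖ ^ 2 := by positivity
    have : ‖B *ᵥ y‖ ≤ √(∑ i, ‖(B *ᵥ y) i‖ ^ 2) := by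
      refine (pi_norm_le_iff_of_nonneg (Real.sqrt_nonneg _)).2 fun i => ?_
      refine Real.le_sqrt_of_sq_le ?_
      exact Finset.single_le_sum (f := fun i => ‖(B *ᵥ y) i‖ ^ 2)
        (fun i _ => by positivity) (Finset.mem_univ i)
    calc _ ≤ (√(∑ i, ‖(B *ᵥ y) i‖ ^ 2)) ^ 2 := by gcongr
      _ = _ := Real.sq_sqrt hs
  calc ‖y‖ ^ 2 ≤ ((‖T‖ + 1) * ‖B *ᵥ y‖) ^ 2 := by gcongr
    _ = (‖T‖ + 1) ^ 2 * ‖B *ᵥ y‖ ^ 2 := by ring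
    _ ≤ _ := by gcongr

lemma integral_quad {m : ℕ} {A : Matrix (Fin m) (Fin m) ℂ} (hA : A.PosDef) :
    ∫ x : Fin m → ℂ, Real.exp (-(star x ⬝ᵥ A *ᵥ x).re) = Real.pi ^ m * (A.det.re)⁻¹ := by
  obtain ⟨B, hB, rfl⟩ := posDef_factor hA
  simp_rw [quad_factor]
  let F : (Fin m → ℂ) →ₗ[ℝ] (Fin m → ℂ) := (Matrix.toLin' B).restrictScalars ℝ
  have hdet : LinearMap.det F = ‖B.det‖ ^ 2 := by
    simp only [F]
    rw [LinearMap.det_restrictScalars, Algebra.norm_complex_apply, LinearMap.det_toLin',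
      Complex.normSq_eq_norm_sq]
  have hB0 : B.det ≠ 0 := hB.ne_zero
  have hdet0 : LinearMap.det F ≠ 0 := by rw [hdet]; positivity
  have hmap := Measure.map_linearMap_addHaar_eq_smul_addHaar (volume : Measure (Fin m → ℂ)) hdet0
  have hFc : Continuous F := F.continuous_of_finiteDimensional
  have h1 : ∫ x : Fin m → ℂ, Real.exp (-∑ i, ‖(B *ᵥ x) i‖ ^ 2)
      = ∫ y, Real.exp (-∑ i, ‖y i‖ ^ 2) ∂(Measure.map F volume) := by
    rw [integral_map hFc.aemeasurable]
    · rfl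
    · exact Continuous.aestronglyMeasurable (by fun_prop)
  have h2 : ∫ y : Fin m → ℂ, Real.exp (-∑ i, ‖y i‖ ^ 2) = Real.pi ^ m := by
    simp_rw [← Finset.sum_neg_distrib, Real.exp_sum]
    rw [integral_fintype_prod_volume_eq_pow (fun z : ℂ => Real.exp (-‖z‖ ^ 2))]
    have := GaussianFourier.integral_rexp_neg_mul_sq_norm (V := ℂ) one_pos
    simp at this
    rw [this]; simp
  rw [h1, hmap, integral_smul_measure, h2, hdet]
  have h3 : (Bᴴ * B).det.re = ‖B.det‖ ^ 2 := by
    rw [det_mul, det_conjTranspose, Complex.sq_norm, Complex.normSq_apply]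
    simp
  rw [h3, ENNReal.toReal_ofReal (by positivity), abs_of_nonneg (by positivity), smul_eq_mul, mul_comm]

lemma det_re_pos {m : ℕ} {A : Matrix (Fin m) (Fin m) ℂ} (hA : A.PosDef) :
    0 < A.det.re ∧ (A.det.re : ℂ) = A.det := by
  have h := Complex.pos_iff.1 hA.det_pos
  refine ⟨h.1, Complex.ext rfl ?_⟩
  simpa using h.2

lemma gauss_pos {m : ℕ} {S : Matrix (Fin m) (Fin m) ℂ} (hS : S.PosDef) (x : Fin m → ℂ) :
    0 < complexGaussianDensity m S x := by
  have := (det_re_pos hS).1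
  unfold complexGaussianDensity
  positivity

lemma integral_gauss {m : ℕ} {S : Matrix (Fin m) (Fin m) ℂ} (hS : S.PosDef) :
    ∫ x, complexGaussianDensity m S x = 1 := by
  unfold complexGaussianDensity
  rw [integral_const_mul, integral_quad hS.inv]
  have h := (det_re_pos hS)
  have h2 : (S⁻¹.det.re)⁻¹ = S.det.re := by
    rw [det_nonsing_inv, ← h.2, Ring.inverse_eq_inv', ← Complex.ofReal_inv, Complex.ofReal_re,
      inv_inv, Complex.ofReal_re]
  rw [h2]
  have := h.1
  field_simp

lemma summable_exp_lattice {m : ℕ} (L : Submodule ℤ (Fin m → ℂ)) [DiscreteTopology L]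
    {b : ℝ} (hb : 0 < b) :
    Summable fun z : L => Real.exp (-(b * ‖z‖ ^ 2)) := by
  set n := Module.finrank ℤ L + 1
  have hs := ZLattice.summable_norm_pow_inv L (2 * n) (by omega)
  refine Summable.of_norm_bounded_eventually (hs.mul_left (n.factorial * (b⁻¹) ^ n)) ?_
  have : ∀ᶠ z : L in Filter.cofinite, z ≠ 0 := by
    simp [Filter.eventually_cofinite]
  filter_upwards [this] with z hz
  have hz' : 0 < ‖z‖ := norm_pos_iff.2 hz
  have ht : 0 < b * ‖z‖ ^ 2 := by positivity
  have h := Real.pow_div_factorial_le_exp _ ht.le n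
  rw [Real.norm_of_nonneg (Real.exp_pos _).le, Real.exp_neg]
  calc (Real.exp (b * ‖z‖ ^ 2))⁻¹ ≤ ((b * ‖z‖ ^ 2) ^ n / n.factorial)⁻¹ := by
        gcongr
    _ = _ := by
        rw [inv_div, mul_pow, ← pow_mul, div_eq_mul_inv, mul_inv, inv_pow, inv_pow, mul_assoc]

lemma gauss_bound {m : ℕ} {S : Matrix (Fin m) (Fin m) ℂ} (hS : S.PosDef) :
    ∃ a C : ℝ, 0 < a ∧ 0 ≤ C ∧ ∀ (R : ℝ) (x y : Fin m → ℂ), ‖x‖ ≤ R →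
      complexGaussianDensity m S (x - y) ≤ C * Real.exp (a * R ^ 2) * Real.exp (-(a / 2 * ‖y‖ ^ 2)) := by
  obtain ⟨a, ha, hq⟩ := quad_lower hS.inv
  have := (det_re_pos hS).1
  refine ⟨a, (Real.pi ^ m * S.det.re)⁻¹, ha, by positivity, fun R x y hx => ?_⟩
  unfold complexGaussianDensity
  rw [mul_assoc, ← Real.exp_add]
  gcongr
  have h1 := hq (x - y)
  have h2 : ‖y‖ ≤ ‖x - y‖ + ‖x‖ := by
    have := norm_sub_le x (x - y)
    simp only [sub_sub_cancel] at this
    linarith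
  have h3 : ‖y‖ ^ 2 ≤ 2 * ‖x - y‖ ^ 2 + 2 * ‖x‖ ^ 2 := by
    nlinarith [norm_nonneg y, norm_nonneg x, norm_nonneg (x - y), sq_nonneg (‖x - y‖ - ‖x‖)]
  have h4 : ‖x‖ ^ 2 ≤ R ^ 2 := by gcongr
  nlinarith

lemma summable_gauss {m : ℕ} (L : Submodule ℤ (Fin m → ℂ)) [DiscreteTopology L]
    {S : Matrix (Fin m) (Fin m) ℂ} (hS : S.PosDef) (x : Fin m → ℂ) :
    Summable fun z : L => complexGaussianDensity m S (x - z) := by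
  obtain ⟨a, C, ha, hC, h⟩ := gauss_bound hS
  exact Summable.of_nonneg_of_le (fun z => (gauss_pos hS _).le)
    (fun z => h ‖x‖ x z le_rfl) ((summable_exp_lattice L (half_pos ha)).mul_left _)

lemma gauss_neg {m : ℕ} (S : Matrix (Fin m) (Fin m) ℂ) (x : Fin m → ℂ) :
    complexGaussianDensity m S (-x) = complexGaussianDensity m S x := by
  unfold complexGaussianDensity
  simp [mulVec_neg]

lemma gauss_sum_bounded {m : ℕ} (L : Submodule ℤ (Fin m → ℂ)) [DiscreteTopology L]
    [IsZLattice ℝ L] {S : Matrix (Fin m) (Fin m) ℂ} (hS : S.PosDef) :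
    ∃ M : ℝ, ∀ x, ∑' z : L, complexGaussianDensity m S (x - z) ≤ M := by
  obtain ⟨a, C, ha, hC, h⟩ := gauss_bound hS
  let b := (Module.Free.chooseBasis ℤ L).ofZLatticeBasis ℝ L
  set R := ∑ i, ‖b i‖
  refine ⟨∑' z : L, C * Real.exp (a * R ^ 2) * Real.exp (-(a / 2 * ‖z‖ ^ 2)), fun x => ?_⟩
  have hmem : (ZSpan.floor b x : Fin m → ℂ) ∈ L := by
    have := (ZSpan.floor b x).2
    exact le_of_eq (Module.Basis.ofZLatticeBasis_span ℝ L (Module.Free.chooseBasis ℤ L)) this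
  let w : L := ⟨_, hmem⟩
  have h1 : ∑' z : L, complexGaussianDensity m S (x - z)
      = ∑' z : L, complexGaussianDensity m S (ZSpan.fract b x - z) := by
    rw [← (Equiv.addRight w).tsum_eq]
    congr 1; ext z; congr 1
    simp only [Equiv.coe_addRight, Submodule.coe_add, ZSpan.fract_apply, w]
    abel
  rw [h1]
  exact (summable_gauss L hS _).tsum_le_tsum
    (fun z => h R _ z (ZSpan.norm_fract_le b x))
    ((summable_exp_lattice L (half_pos ha)).mul_left _)

lemma gauss_mul {m : ℕ} {S₁ S₂ : Matrix (Fin m) (Fin m) ℂ} (hS₁ : S₁.PosDef) (hS₂ : S₂.PosDef)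
    (x y : Fin m → ℂ) :
    complexGaussianDensity m S₁ y * complexGaussianDensity m S₂ (x - y) =
      complexGaussianDensity m (S₁ + S₂) x *
        complexGaussianDensity m (S₁⁻¹ + S₂⁻¹)⁻¹ (S₁ *ᵥ (S₁ + S₂)⁻¹ *ᵥ x - y) := by
  have u1 : IsUnit S₁.det := hS₁.det_pos.ne'.isUnit
  have u2 : IsUnit S₂.det := hS₂.det_pos.ne'.isUnit
  have hS₀ : (S₁ + S₂).PosDef := hS₁.add hS₂
  have u0 : IsUnit (S₁ + S₂).det := hS₀.det_pos.ne'.isUnit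
  have h3' : (S₁⁻¹ + S₂⁻¹).PosDef := hS₁.inv.add hS₂.inv
  have u3 : IsUnit (S₁⁻¹ + S₂⁻¹).det := h3'.det_pos.ne'.isUnit
  have hdet : S₁.det.re * S₂.det.re = (S₁ + S₂).det.re * ((S₁⁻¹ + S₂⁻¹)⁻¹).det.re := by
    have e : S₁ * (S₁⁻¹ + S₂⁻¹) * S₂ = S₁ + S₂ := by
      rw [mul_add, add_mul, mul_nonsing_inv _ u1, mul_assoc, nonsing_inv_mul _ u2, one_mul, mul_one,
        add_comm]
    have e2 := congrArg det e
    rw [det_mul, det_mul] at e2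
    have : S₁.det * S₂.det = (S₁ + S₂).det * ((S₁⁻¹ + S₂⁻¹)⁻¹).det := by
      rw [← e2, det_nonsing_inv, Ring.inverse_eq_inv']
      have := u3.ne_zero
      field_simp
    rw [← (det_re_pos hS₁).2, ← (det_re_pos hS₂).2, ← (det_re_pos hS₀).2,
      ← (det_re_pos h3'.inv).2] at this
    exact_mod_cast this
  set p := (S₁ + S₂)⁻¹ *ᵥ x with hp
  set u := S₁ *ᵥ p with hu
  set t := S₂ *ᵥ p with ht
  have hx : x = u + t := by
    rw [hu, ht, ← add_mulVec, hp, mulVec_mulVec, mul_nonsing_inv _ u0, one_mulVec]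
  set z := u - y with hz
  have hy : y = u - z := by rw [hz]; abel
  have hxy : x - y = t + z := by rw [hx, hy]; abel
  have a1 : S₁⁻¹ *ᵥ u = p := by rw [hu, mulVec_mulVec, nonsing_inv_mul _ u1, one_mulVec]
  have a2 : S₂⁻¹ *ᵥ t = p := by rw [ht, mulVec_mulVec, nonsing_inv_mul _ u2, one_mulVec]
  have b1 : star u ⬝ᵥ S₁⁻¹ *ᵥ z = star p ⬝ᵥ z := by
    rw [hu, star_mulVec, hS₁.1.eq, dotProduct_mulVec, vecMul_vecMul, mul_nonsing_inv _ u1,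
      vecMul_one]
  have b2 : star t ⬝ᵥ S₂⁻¹ *ᵥ z = star p ⬝ᵥ z := by
    rw [ht, star_mulVec, hS₂.1.eq, dotProduct_mulVec, vecMul_vecMul, mul_nonsing_inv _ u2,
      vecMul_one]
  have hq : star y ⬝ᵥ S₁⁻¹ *ᵥ y + star (x - y) ⬝ᵥ S₂⁻¹ *ᵥ (x - y) =
      star x ⬝ᵥ p + star z ⬝ᵥ (S₁⁻¹ + S₂⁻¹) *ᵥ z := by
    rw [hxy, hy, hx]
    simp only [star_add, star_sub, mulVec_add, mulVec_sub, add_mulVec, dotProduct_add,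
      dotProduct_sub, add_dotProduct, sub_dotProduct, a1, a2, b1, b2]
    ring
  have hq' := congrArg Complex.re hq
  simp only [Complex.add_re] at hq'
  unfold complexGaussianDensity
  rw [nonsing_inv_nonsing_inv _ u3, ← hp]
  have hE : Real.exp (-(star y ⬝ᵥ S₁⁻¹ *ᵥ y).re) *
      Real.exp (-(star (x - y) ⬝ᵥ S₂⁻¹ *ᵥ (x - y)).re) =
      Real.exp (-(star x ⬝ᵥ p).re) * Real.exp (-(star z ⬝ᵥ (S₁⁻¹ + S₂⁻¹) *ᵥ z).re) := by
    rw [← Real.exp_add, ← Real.exp_add, ← neg_add, ← neg_add, hq']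
  have hD : (Real.pi ^ m * S₁.det.re)⁻¹ * (Real.pi ^ m * S₂.det.re)⁻¹ =
      (Real.pi ^ m * (S₁ + S₂).det.re)⁻¹ * (Real.pi ^ m * (S₁⁻¹ + S₂⁻¹)⁻¹.det.re)⁻¹ := by
    rw [← mul_inv, ← mul_inv, mul_mul_mul_comm, hdet, mul_mul_mul_comm]
  rw [mul_mul_mul_comm, hE, hD, mul_mul_mul_comm]

/-- **A generalized Regev lemma.** Let `Λ ⊂ ℂ^m` be a full-rank lattice with covolume
`V(Λ)`, `c ∈ ℂ^m`, and `Σ₁, Σ₂` Hermitian positive-definite. Set `Σ₀ = Σ₁ + Σ₂` and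
`Σ₃ = (Σ₁⁻¹ + Σ₂⁻¹)⁻¹`. If the flatness factor
`ε_Λ(√Σ₃) = sup_x |V(Λ)·∑_{λ∈Λ} f_{√Σ₃}(x−λ) − 1|` is at most `ε ≤ 1/2`, then the density
`g(x) = ∑_{λ∈Λ+c} D(λ) f_{√Σ₂}(x−λ)` of the sum of a discrete Gaussian on `Λ+c` with
parameter `Σ₁` and an independent continuous Gaussian with covariance `Σ₂` satisfies
`(1−4ε) f_{√Σ₀}(x) ≤ g(x) ≤ (1+4ε) f_{√Σ₀}(x)` for every `x`. -/
theorem discrete_plus_continuous_gaussian_flatness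
    (m : ℕ)
    (L : Submodule ℤ (Fin m → ℂ)) [DiscreteTopology L]
    (hfull : Submodule.span ℝ (L : Set (Fin m → ℂ)) = ⊤)
    (c : Fin m → ℂ)
    (S₁ S₂ : Matrix (Fin m) (Fin m) ℂ) (hS₁ : S₁.PosDef) (hS₂ : S₂.PosDef)
    (ε : ℝ) (hε : ε ≤ 1 / 2)
    (hflat : (⨆ x : Fin m → ℂ,
        |ZLattice.covolume L volume *
            (∑' fl : L, complexGaussianDensity m (S₁⁻¹ + S₂⁻¹)⁻¹ (x - fl)) - 1|) ≤ ε)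
    (x : Fin m → ℂ) :
    (1 - 4 * ε) * complexGaussianDensity m (S₁ + S₂) x ≤
      (∑' fl : L, (complexGaussianDensity m S₁ ((fl : Fin m → ℂ) + c) /
            ∑' fl' : L, complexGaussianDensity m S₁ ((fl' : Fin m → ℂ) + c)) *
          complexGaussianDensity m S₂ (x - ((fl : Fin m → ℂ) + c))) ∧
    (∑' fl : L, (complexGaussianDensity m S₁ ((fl : Fin m → ℂ) + c) /
          ∑' fl' : L, complexGaussianDensity m S₁ ((fl' : Fin m → ℂ) + c)) *
        complexGaussianDensity m S₂ (x - ((fl : Fin m → ℂ) + c))) ≤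
      (1 + 4 * ε) * complexGaussianDensity m (S₁ + S₂) x := by
  have : IsZLattice ℝ L := ⟨hfull⟩
  have hS₀ : (S₁ + S₂).PosDef := hS₁.add hS₂
  have hS₃ : (S₁⁻¹ + S₂⁻¹)⁻¹.PosDef := (hS₁.inv.add hS₂.inv).inv
  set V := ZLattice.covolume L volume with hV
  have hVpos : 0 < V := ZLattice.covolume_pos L volume
  set S₃ := (S₁⁻¹ + S₂⁻¹)⁻¹ with hS₃def
  -- pointwise form of the flatness hypothesis
  have hpt : ∀ w : Fin m → ℂ,
      |V * (∑' fl : L, complexGaussianDensity m S₃ (w - fl)) - 1| ≤ ε := by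
    intro w
    refine le_trans (le_ciSup (f := fun w : Fin m → ℂ =>
      |V * (∑' fl : L, complexGaussianDensity m S₃ (w - fl)) - 1|) ?_ w) hflat
    obtain ⟨M, hM⟩ := gauss_sum_bounded L hS₃
    refine ⟨V * M + 1, ?_⟩
    rintro _ ⟨v, rfl⟩
    have h0 : 0 ≤ ∑' fl : L, complexGaussianDensity m S₃ (v - fl) :=
      tsum_nonneg fun z => (gauss_pos hS₃ _).le
    have h1 := mul_le_mul_of_nonneg_left (hM v) hVpos.le
    have h2 := mul_nonneg hVpos.le h0
    rw [abs_le]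
    constructor <;> linarith
  have hε0 : 0 ≤ ε := (abs_nonneg _).trans (hpt 0)
  set N := ∑' fl' : L, complexGaussianDensity m S₁ ((fl' : Fin m → ℂ) + c) with hN
  have hsum1 : Summable fun fl : L => complexGaussianDensity m S₁ ((fl : Fin m → ℂ) + c) := by
    refine (summable_gauss L hS₁ (-c)).congr fun z => ?_
    rw [← gauss_neg]; congr 1; abel
  have hNpos : 0 < N := hsum1.tsum_pos (fun z => (gauss_pos hS₁ _).le) 0 (gauss_pos hS₁ _)
  let h : (Fin m → ℂ) → ℝ := fun x => ∑' fl : L,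
    complexGaussianDensity m S₁ ((fl : Fin m → ℂ) + c) *
      complexGaussianDensity m S₂ (x - ((fl : Fin m → ℂ) + c))
  have hform : ∀ x, V * h x = complexGaussianDensity m (S₁ + S₂) x *
      (V * ∑' fl : L, complexGaussianDensity m S₃ ((S₁ *ᵥ (S₁ + S₂)⁻¹ *ᵥ x - c) - fl)) := by
    intro x
    simp only [h]
    simp_rw [gauss_mul hS₁ hS₂]
    rw [tsum_mul_left, mul_left_comm]
    refine congrArg (fun t => complexGaussianDensity m (S₁ + S₂) x * (V * t))
      (tsum_congr fun z => ?_)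
    congr 1; abel
  have hlow : ∀ x, (1 - ε) * complexGaussianDensity m (S₁ + S₂) x ≤ V * h x := by
    intro x
    rw [hform, mul_comm]
    have := abs_le.1 (hpt (S₁ *ᵥ (S₁ + S₂)⁻¹ *ᵥ x - c))
    exact mul_le_mul_of_nonneg_left (by linarith) (gauss_pos hS₀ x).le
  have hupp : ∀ x, V * h x ≤ (1 + ε) * complexGaussianDensity m (S₁ + S₂) x := by
    intro x
    rw [hform, mul_comm (1 + ε)]
    have := abs_le.1 (hpt (S₁ *ᵥ (S₁ + S₂)⁻¹ *ᵥ x - c))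
    exact mul_le_mul_of_nonneg_left (by linarith) (gauss_pos hS₀ x).le
  -- the normalising constant
  have hI0 : Integrable (complexGaussianDensity m (S₁ + S₂)) :=
    integrable_of_integral_eq_one (integral_gauss hS₀)
  have hI2 : Integrable (complexGaussianDensity m S₂) :=
    integrable_of_integral_eq_one (integral_gauss hS₂)
  have hint : ∫ x, h x = N := by
    simp only [h]
    have hi : ∀ fl : L, ∫ x, complexGaussianDensity m S₁ ((fl : Fin m → ℂ) + c) *
        complexGaussianDensity m S₂ (x - ((fl : Fin m → ℂ) + c)) =
        complexGaussianDensity m S₁ ((fl : Fin m → ℂ) + c) := by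
      intro fl
      rw [integral_const_mul, integral_sub_right_eq_self (complexGaussianDensity m S₂),
        integral_gauss hS₂, mul_one]
    rw [← integral_tsum_of_summable_integral_norm]
    · exact tsum_congr hi
    · intro fl
      exact (hI2.comp_sub_right _).const_mul _
    · refine hsum1.congr fun fl => ?_
      refine (hi fl).symm.trans ?_
      refine integral_congr_ae (Filter.Eventually.of_forall fun x => ?_)
      exact (Real.norm_of_nonneg (mul_nonneg (gauss_pos hS₁ _).le (gauss_pos hS₂ _).le)).symm
  have hIh : Integrable h := Integrable.of_integral_ne_zero (by rw [hint]; exact hNpos.ne')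
  have hNlow : 1 - ε ≤ V * N := by
    have := integral_mono (hI0.const_mul (1 - ε)) (hIh.const_mul V) hlow
    rwa [integral_const_mul, integral_const_mul, hint, integral_gauss hS₀, mul_one] at this
  have hNupp : V * N ≤ 1 + ε := by
    have := integral_mono (hIh.const_mul V) (hI0.const_mul (1 + ε)) hupp
    rwa [integral_const_mul, integral_const_mul, hint, integral_gauss hS₀, mul_one] at this
  have hg : (∑' fl : L, (complexGaussianDensity m S₁ ((fl : Fin m → ℂ) + c) / N) *
      complexGaussianDensity m S₂ (x - ((fl : Fin m → ℂ) + c))) = h x / N := by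
    simp only [h]
    rw [← tsum_div_const]
    exact tsum_congr fun z => by ring
  rw [hg]
  have hf := gauss_pos hS₀ x
  have hl := hlow x
  have hu := hupp x
  set f := complexGaussianDensity m (S₁ + S₂) x
  constructor
  · rw [le_div_iff₀ hNpos]
    refine le_of_mul_le_mul_left ?_ hVpos
    by_cases h4 : 0 ≤ 1 - 4 * ε
    · calc V * ((1 - 4 * ε) * f * N) = ((1 - 4 * ε) * (V * N)) * f := by ring
        _ ≤ ((1 - 4 * ε) * (1 + ε)) * f := by gcongr
        _ ≤ (1 - ε) * f := by gcongr; nlinarith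
        _ ≤ _ := hl
    · have : (1 - 4 * ε) * f * N ≤ 0 :=
        mul_nonpos_of_nonpos_of_nonneg
          (mul_nonpos_of_nonpos_of_nonneg (by linarith) hf.le) hNpos.le
      have h5 : 0 ≤ (1 - ε) * f := mul_nonneg (by linarith) hf.le
      have h6 := mul_nonpos_of_nonneg_of_nonpos hVpos.le this
      linarith
  · rw [div_le_iff₀ hNpos]
    refine le_of_mul_le_mul_left ?_ hVpos
    calc V * h x ≤ (1 + ε) * f := hu
      _ ≤ ((1 + 4 * ε) * (1 - ε)) * f := by gcongr; nlinarith
      _ ≤ ((1 + 4 * ε) * (V * N)) * f := by gcongr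
      _ = _ := by ring
end

section
/- Let Λ ⊂ ℂ^d be a full-rank lattice, σ > 0, A ∈ ℂ^{d×d}, and t ∈ ℂ^d. Then ∑_{x∈Λ} exp(−‖x‖²/σ² + Re(t†Ax)) ≤ exp(σ²‖A†t‖²/4) · ∑_{x∈Λ} exp(−‖x‖²/σ²). (Equivalently, if x is sampled from the discrete Gaussian D_{Λ,σ} with probabilities proportional to exp(−‖x‖²/σ²), then the moment generating function satisfies E[exp(Re(t†Ax))] ≤ exp((σ²/4)‖A†t‖²).) -/
open Matrix

lemma dg_inj {G : Type*} [AddCommGroup G] (h2 : ∀ x y : G, x + x = y + y → x = y) :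
    Function.Injective (fun z : G × G => ((z.1 + z.2, z.1 - z.2) : G × G)) := by
  rintro ⟨a, b⟩ ⟨c, d⟩ h
  simp only [Prod.mk.injEq] at h
  have h1 : a = c := by
    apply h2
    calc a + a = (a + b) + (a - b) := by abel
      _ = (c + d) + (c - d) := by rw [h.1, h.2]
      _ = c + c := by abel
  subst h1
  simpa using h.1

lemma dg_summable {G : Type*} [AddCommGroup G] (h2 : ∀ x y : G, x + x = y + y → x = y)
    (u v : G → ℝ) (hu : Summable u) (hv : Summable v) :
    Summable (fun z : G × G => u (z.1 + z.2) * v (z.1 - z.2)) := by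
  have hu' : Summable (fun x => ‖u x‖) := hu.norm
  have hv' : Summable (fun x => ‖v x‖) := hv.norm
  have h : Summable (fun z : G × G => u z.1 * v z.2) :=
    summable_mul_of_summable_norm hu' hv'
  have h' := h.comp_injective (dg_inj h2)
  simpa only [Function.comp_def] using h'

lemma dg_nonneg {G : Type*} [AddCommGroup G] (h2 : ∀ x y : G, x + x = y + y → x = y)
    (w : G → ℝ) (hw : Summable w) :
    0 ≤ ∑' z : G × G, w (z.1 + z.2) * w (z.1 - z.2) := by
  let φ : G → G ⧸ (nsmulAddMonoidHom (α := G) 2).range := QuotientAddGroup.mk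
  have hφ : ∀ a b, φ a = φ b ↔ ∃ y, y + y = b - a := by
    intro a b
    rw [show φ a = φ b ↔ _ from QuotientAddGroup.eq]
    simp [AddMonoidHom.mem_range, two_nsmul, neg_add_eq_sub]
  let F : (Σ r, {x // φ x = r} × {x // φ x = r}) → ℝ := fun s => w s.2.1 * w s.2.2
  let e : G × G → (Σ r, {x // φ x = r} × {x // φ x = r}) := fun z =>
    ⟨φ (z.1 + z.2), ⟨z.1 + z.2, rfl⟩, ⟨z.1 - z.2, (hφ _ _).2 ⟨z.2, by abel⟩⟩⟩
  have he : Function.Bijective e := by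
    constructor
    · intro z z' h
      apply dg_inj h2
      have := congrArg (fun s : (Σ r, {x // φ x = r} × {x // φ x = r}) =>
        ((s.2.1 : G), (s.2.2 : G))) h
      exact this
    · rintro ⟨r, ⟨p, hp⟩, ⟨q, hq⟩⟩
      obtain ⟨y, hy⟩ := (hφ q p).1 (hq.trans hp.symm)
      subst hp
      have hpq : p = q + y + y := by rw [add_assoc, hy]; abel
      subst hpq
      refine ⟨(q + y, y), ?_⟩
      simp [e]
  have hs : Summable (fun z : G × G => F (e z)) := dg_summable h2 w w hw hw
  have hsF : Summable F := (Equiv.ofBijective e he).summable_iff.1 hs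
  have : ∑' z : G × G, w (z.1 + z.2) * w (z.1 - z.2) = ∑' s, F s :=
    (Equiv.ofBijective e he).tsum_eq F
  rw [this, hsF.tsum_sigma]
  refine tsum_nonneg fun r => ?_
  have hr : Summable (fun x : {x // φ x = r} => w x) := hw.subtype _
  have := tsum_mul_tsum_of_summable_norm hr.norm hr.norm
  change 0 ≤ ∑' z : {x // φ x = r} × {x // φ x = r}, w z.1 * w z.2
  rw [← this]
  exact mul_self_nonneg _

section
variable {E : Type*} [NormedAddCommGroup E] [NormedSpace ℝ E] [FiniteDimensional ℝ E]
  (L : Submodule ℤ E) [DiscreteTopology L]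

lemma dg_sum0 (s : ℝ) (hs : 0 < s) : Summable (fun x : L => Real.exp (-‖(x : E)‖ ^ 2 / s)) := by
  classical
  set n := Module.finrank ℤ L + 1
  have h := (ZLattice.summable_norm_pow_inv L (2 * n) (by omega)).mul_left (s ^ n * (n.factorial : ℝ))
  have h' := h.add (summable_of_hasFiniteSupport (f := fun x : L => if x = 0 then (1 : ℝ) else 0)
    ((Set.finite_singleton (0 : L)).subset (by intro x; simp)))
  refine Summable.of_nonneg_of_le (fun _ => (Real.exp_pos _).le) (fun x => ?_) h'
  by_cases hx : x = 0
  · subst hx; simp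
  · have hx' : 0 < ‖(x : E)‖ := by simpa using hx
    have := Real.pow_div_factorial_le_exp (x := ‖(x : E)‖ ^ 2 / s) (by positivity) n
    rw [if_neg hx, add_zero, neg_div, Real.exp_neg]
    refine (inv_anti₀ (by positivity) this).trans (le_of_eq ?_)
    rw [Submodule.coe_norm, div_pow, ← pow_mul, inv_pow]
    field_simp

lemma dg_shift (s : ℝ) (hs : 0 < s) (c x : E) :
    Real.exp (-‖x - c‖ ^ 2 / s) ≤ Real.exp (‖c‖ ^ 2 / s) * Real.exp (-‖x‖ ^ 2 / (2 * s)) := by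
  rw [← Real.exp_add, Real.exp_le_exp]
  have h : ‖x‖ ≤ ‖x - c‖ + ‖c‖ := by simpa using norm_add_le (x - c) c
  have : ‖x‖ ^ 2 ≤ 2 * ‖x - c‖ ^ 2 + 2 * ‖c‖ ^ 2 := by
    nlinarith [sq_nonneg (‖x - c‖ - ‖c‖), norm_nonneg x]
  have e : ‖c‖ ^ 2 / s + -‖x‖ ^ 2 / (2 * s) - (-‖x - c‖ ^ 2 / s)
    = (2 * ‖x - c‖ ^ 2 + 2 * ‖c‖ ^ 2 - ‖x‖ ^ 2) / (2 * s) := by field_simp; ring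
  have : 0 ≤ (2 * ‖x - c‖ ^ 2 + 2 * ‖c‖ ^ 2 - ‖x‖ ^ 2) / (2 * s) :=
    div_nonneg (by linarith) (by positivity)
  linarith

lemma dg_sum (s : ℝ) (hs : 0 < s) (c : E) :
    Summable (fun x : L => Real.exp (-‖(x : E) - c‖ ^ 2 / s)) :=
  Summable.of_nonneg_of_le (fun _ => (Real.exp_pos _).le) (fun x => dg_shift s hs c x)
    ((dg_sum0 L (2 * s) (by positivity)).mul_left _)

lemma dg_bdd (hfull : Submodule.span ℝ (L : Set E) = ⊤) (s : ℝ) (hs : 0 < s) :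
    ∃ M, ∀ c : E, ∑' x : L, Real.exp (-‖(x : E) - c‖ ^ 2 / s) ≤ M := by
  have : IsZLattice ℝ L := ⟨hfull⟩
  have : Module.Finite ℤ L := ZLattice.module_finite ℝ L
  have : Module.Free ℤ L := ZLattice.module_free ℝ L
  let b₀ := Module.Free.chooseBasis ℤ L
  let b := b₀.ofZLatticeBasis ℝ L
  refine ⟨Real.exp ((∑ i, ‖b i‖) ^ 2 / s) * ∑' x : L, Real.exp (-‖(x : E)‖ ^ 2 / (2 * s)), ?_⟩
  intro c
  have hmem : ((ZSpan.floor b c : Submodule.span ℤ (Set.range b)) : E) ∈ L := by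
    have := (ZSpan.floor b c).2
    exact (b₀.ofZLatticeBasis_span ℝ L).le this
  let ℓ : L := ⟨_, hmem⟩
  have hℓ : c = ZSpan.fract b c + (ℓ : E) := by simp [ZSpan.fract_apply, ℓ]
  rw [← (Equiv.addRight ℓ).tsum_eq, ← tsum_mul_left]
  refine Summable.tsum_le_tsum (fun x => ?_) ?_
    ((dg_sum0 L (2 * s) (by positivity)).mul_left _)
  · have : (((Equiv.addRight ℓ) x : L) : E) - c = (x : E) - ZSpan.fract b c := by
      simp [ZSpan.fract_apply, ℓ]; abel
    rw [this]
    refine (dg_shift s hs _ _).trans ?_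
    have := ZSpan.norm_fract_le b c
    gcongr
  · exact (Equiv.addRight ℓ).summable_iff.2 (dg_sum L s hs c)

lemma dg_key (hpar : ∀ a b : E, ‖a + b‖ ^ 2 + ‖a - b‖ ^ 2 = 2 * (‖a‖ ^ 2 + ‖b‖ ^ 2))
    (s : ℝ) (hs : 0 < s) (f : E → ℝ)
    (hf : ∀ c, f c = ∑' x : L, Real.exp (-‖(x : E) - c‖ ^ 2 / s)) (c : E) :
    2 * f c ^ 2 ≤ f ((2 : ℝ) • c) * f 0 + f 0 ^ 2 := by
  have h2 : ∀ x y : L, x + x = y + y → x = y := by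
    intro x y h
    have h' : (x : E) + x = y + y := by exact_mod_cast congrArg (Subtype.val) h
    rw [← two_smul ℝ, ← two_smul ℝ] at h'
    exact Subtype.ext (smul_right_injective E (two_ne_zero) h')
  have hs2 : 0 < 2 * s := by positivity
  let u : E → L → ℝ := fun a x => Real.exp (-‖(x : E) - a‖ ^ 2 / (2 * s))
  have hu : ∀ a, Summable (u a) := fun a => dg_sum L _ hs2 a
  have hprod : ∀ a b : E, ∑' z : L × L, u (a + b) (z.1 + z.2) * u (a - b) (z.1 - z.2)
      = f a * f b := by
    intro a b
    rw [hf, hf, tsum_mul_tsum_of_summable_norm (dg_sum L s hs a).norm (dg_sum L s hs b).norm]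
    refine tsum_congr fun z => ?_
    simp only [u]
    rw [← Real.exp_add, ← Real.exp_add]
    congr 1
    have := hpar ((z.1 : E) - a) ((z.2 : E) - b)
    rw [show ((z.1 : E) - a) + ((z.2 : E) - b) = ((z.1 + z.2 : L) : E) - (a + b) by
        push_cast; abel,
      show ((z.1 : E) - a) - ((z.2 : E) - b) = ((z.1 - z.2 : L) : E) - (a - b) by
        push_cast; abel] at this
    field_simp
    linarith
  have heven : f (-c) = f c := by
    rw [hf, hf, ← (Equiv.neg L).tsum_eq]
    refine tsum_congr fun x => ?_
    rw [← norm_neg]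
    congr 4
    simp; abel
  have h := dg_nonneg h2 (fun x => u ((2 : ℝ) • c) x - u 0 x) ((hu _).sub (hu _))
  have hsu := fun a b => dg_summable h2 (u a) (u b) (hu a) (hu b)
  have hS : ∑' z : L × L, (u ((2 : ℝ) • c) (z.1 + z.2) - u 0 (z.1 + z.2)) *
      (u ((2 : ℝ) • c) (z.1 - z.2) - u 0 (z.1 - z.2)) =
      f ((2 : ℝ) • c) * f 0 - f c * f c - f c * f (-c) + f 0 * f 0 := by
    rw [← hprod, ← hprod, ← hprod, ← hprod]
    simp only [add_zero, sub_zero, sub_self, add_neg_cancel, sub_neg_eq_add, ← two_smul ℝ c]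
    rw [← (hsu _ _).tsum_sub (hsu _ _), ← ((hsu _ _).sub (hsu _ _)).tsum_sub (hsu _ _),
      ← (((hsu _ _).sub (hsu _ _)).sub (hsu _ _)).tsum_add (hsu _ _)]
    refine tsum_congr fun z => ?_
    ring
  rw [hS, heven] at h
  linarith [h, sq (f c), sq (f 0)]

lemma dg_main (hpar : ∀ a b : E, ‖a + b‖ ^ 2 + ‖a - b‖ ^ 2 = 2 * (‖a‖ ^ 2 + ‖b‖ ^ 2))
    (hfull : Submodule.span ℝ (L : Set E) = ⊤) (s : ℝ) (hs : 0 < s) (c : E) :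
    ∑' x : L, Real.exp (-‖(x : E) - c‖ ^ 2 / s) ≤ ∑' x : L, Real.exp (-‖(x : E)‖ ^ 2 / s) := by
  obtain ⟨M, hM⟩ := dg_bdd L hfull s hs
  set f : E → ℝ := fun c => ∑' x : L, Real.exp (-‖(x : E) - c‖ ^ 2 / s) with hf
  have key := dg_key L hpar s hs f (fun _ => rfl)
  have h0 : ∑' x : L, Real.exp (-‖(x : E)‖ ^ 2 / s) = f 0 := by simp [hf]
  rw [h0]
  change f c ≤ f 0
  have hbdd : BddAbove (Set.range f) := ⟨M, by rintro _ ⟨c, rfl⟩; exact hM c⟩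
  have hnn : ∀ c, 0 ≤ f c := fun c => tsum_nonneg fun _ => (Real.exp_pos _).le
  set S := ⨆ c, f c
  have hle : ∀ c, f c ≤ S := fun c => le_ciSup hbdd c
  have hS0 : 0 ≤ S := (hnn 0).trans (hle 0)
  have h1 : ∀ c, f c ≤ Real.sqrt ((S * f 0 + f 0 ^ 2) / 2) := by
    intro c
    apply Real.le_sqrt_of_sq_le
    have := key c
    have := mul_le_mul_of_nonneg_right (hle ((2 : ℝ) • c)) (hnn 0)
    linarith
  have h2 : S ≤ Real.sqrt ((S * f 0 + f 0 ^ 2) / 2) := ciSup_le h1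
  have h3 := (Real.le_sqrt hS0 (by have := hnn 0; positivity)).1 h2
  have h4 : S ≤ f 0 := by
    by_contra! hlt
    nlinarith [hnn 0]
  exact (hle c).trans h4
end

theorem discreteGaussian_mgf_bound
    (d : ℕ)
    (L : Submodule ℤ (EuclideanSpace ℂ (Fin d))) [DiscreteTopology L]
    (hfull : Submodule.span ℝ (L : Set (EuclideanSpace ℂ (Fin d))) = ⊤)
    (σ : ℝ) (hσ : 0 < σ)
    (A : Matrix (Fin d) (Fin d) ℂ) (t : EuclideanSpace ℂ (Fin d)) :
    (∑' x : L, Real.exp (-‖(x : EuclideanSpace ℂ (Fin d))‖ ^ 2 / σ ^ 2 +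
        (star (t : Fin d → ℂ) ⬝ᵥ A *ᵥ ((x : EuclideanSpace ℂ (Fin d)) : Fin d → ℂ)).re)) ≤
      Real.exp (σ ^ 2 * ‖((WithLp.equiv 2 (Fin d → ℂ)).symm (Aᴴ *ᵥ (t : Fin d → ℂ)))‖ ^ 2 / 4) *
        ∑' x : L, Real.exp (-‖(x : EuclideanSpace ℂ (Fin d))‖ ^ 2 / σ ^ 2) := by
  set v : EuclideanSpace ℂ (Fin d) := (WithLp.equiv 2 (Fin d → ℂ)).symm (Aᴴ *ᵥ (t : Fin d → ℂ))
    with hv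
  have hpar : ∀ a b : EuclideanSpace ℂ (Fin d),
      ‖a + b‖ ^ 2 + ‖a - b‖ ^ 2 = 2 * (‖a‖ ^ 2 + ‖b‖ ^ 2) := by
    intro a b
    have := parallelogram_law_with_norm ℂ a b
    exact this
  have hdot : ∀ x : EuclideanSpace ℂ (Fin d),
      (star (t : Fin d → ℂ) ⬝ᵥ A *ᵥ (x : Fin d → ℂ)).re = (inner ℂ x v).re := by
    intro x
    rw [← inner_conj_symm, Complex.conj_re]
    congr 1
    rw [EuclideanSpace.inner_eq_star_dotProduct, hv, dotProduct_comm (x.ofLp)]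
    change _ = star (Aᴴ *ᵥ (t : Fin d → ℂ)) ⬝ᵥ _
    rw [star_mulVec, conjTranspose_conjTranspose, dotProduct_mulVec]
  have hb := dg_main L hpar hfull (σ ^ 2) (by positivity) (((σ ^ 2 / 2 : ℝ) : ℂ) • v)
  refine le_trans (le_of_eq ?_) (mul_le_mul_of_nonneg_left hb (Real.exp_pos _).le)
  rw [← tsum_mul_left]
  refine tsum_congr fun x => ?_
  rw [← Real.exp_add, hdot]
  congr 1
  rw [@norm_sub_sq ℂ, norm_smul, inner_smul_right, Complex.norm_real, Real.norm_eq_abs,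
    abs_of_pos (by positivity : 0 < σ ^ 2 / 2)]
  simp only [RCLike.re_to_complex, Complex.re_ofReal_mul]
  field_simp
  ring
end

section
/- Let H ∈ ℂ^{n×m}, let ρ > 0, and let R ∈ ℂ^{m×m} be an invertible matrix with R†R = H†H + ρ^{-1}·I_m. Set F = R^{-†}H† ∈ ℂ^{m×n} (where R^{-†} denotes the inverse of R†). Then FH − R = −ρ^{-1}R^{-†}, and consequently ρ·(FH−R)(FH−R)† + F F† = I_m; equivalently, for σ_s, σ_w > 0 with ρ = σ_s²/σ_w², one has σ_s²·(FH−R)(FH−R)† + σ_w²·F F† = σ_w²·I_m. -/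
open Matrix

/-- **The MMSE-GDFE covariance identity.** Let `H ∈ ℂ^{n×m}`, `ρ > 0`, and let
`R ∈ ℂ^{m×m}` be invertible with `R†R = H†H + ρ⁻¹I`. Set `F = R^{-†}H†`. Then
`FH − R = −ρ⁻¹R^{-†}`, hence `ρ(FH−R)(FH−R)† + FF† = I`; equivalently, for
`σ_s, σ_w > 0` with `ρ = σ_s²/σ_w²`,
`σ_s²(FH−R)(FH−R)† + σ_w²FF† = σ_w²I`. -/
theorem mmse_gdfe_covariance_identity
    (m n : ℕ) (H : Matrix (Fin n) (Fin m) ℂ)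
    (σs σw : ℝ) (hσs : 0 < σs) (hσw : 0 < σw)
    (ρ : ℝ) (hρ : ρ = σs ^ 2 / σw ^ 2)
    (R : Matrix (Fin m) (Fin m) ℂ) (hR : IsUnit R.det)
    (hRR : Rᴴ * R = Hᴴ * H + ((ρ : ℂ)⁻¹) • (1 : Matrix (Fin m) (Fin m) ℂ)) :
    (Rᴴ)⁻¹ * Hᴴ * H - R = -((ρ : ℂ)⁻¹ • (Rᴴ)⁻¹) ∧
    (ρ : ℂ) • (((Rᴴ)⁻¹ * Hᴴ * H - R) * ((Rᴴ)⁻¹ * Hᴴ * H - R)ᴴ) +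
        ((Rᴴ)⁻¹ * Hᴴ) * ((Rᴴ)⁻¹ * Hᴴ)ᴴ = 1 ∧
    ((σs : ℂ) ^ 2) • (((Rᴴ)⁻¹ * Hᴴ * H - R) * ((Rᴴ)⁻¹ * Hᴴ * H - R)ᴴ) +
        ((σw : ℂ) ^ 2) • (((Rᴴ)⁻¹ * Hᴴ) * ((Rᴴ)⁻¹ * Hᴴ)ᴴ) =
      ((σw : ℂ) ^ 2) • (1 : Matrix (Fin m) (Fin m) ℂ) := by
  have hs : (σs : ℂ) ≠ 0 := by exact_mod_cast hσs.ne'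
  have hw : (σw : ℂ) ≠ 0 := by exact_mod_cast hσw.ne'
  have hρ' : (ρ : ℂ) = (σs : ℂ) ^ 2 / (σw : ℂ) ^ 2 := by rw [hρ]; push_cast; rfl
  have hρ0 : (ρ : ℂ) ≠ 0 := by
    rw [hρ']
    exact div_ne_zero (pow_ne_zero _ hs) (pow_ne_zero _ hw)
  have hRd : IsUnit (Rᴴ).det := by
    rw [Matrix.det_conjTranspose]
    exact hR.star
  have hHH : Hᴴ * H = Rᴴ * R - ((ρ : ℂ)⁻¹) • (1 : Matrix (Fin m) (Fin m) ℂ) := by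
    rw [hRR, add_sub_cancel_right]
  have hG : (Rᴴ)⁻¹ * Rᴴ = 1 := Matrix.nonsing_inv_mul _ hRd
  have hGH : ((Rᴴ)⁻¹)ᴴ = R⁻¹ := by
    rw [Matrix.conjTranspose_nonsing_inv, Matrix.conjTranspose_conjTranspose]
  have hRi : R * R⁻¹ = 1 := Matrix.mul_nonsing_inv _ hR
  have h0 : (Rᴴ)⁻¹ * Hᴴ * H = R - (ρ : ℂ)⁻¹ • (Rᴴ)⁻¹ := by
    rw [Matrix.mul_assoc, hHH, Matrix.mul_sub, ← Matrix.mul_assoc, hG, Matrix.one_mul,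
      Matrix.mul_smul, Matrix.mul_one]
  have h1 : (Rᴴ)⁻¹ * Hᴴ * H - R = -((ρ : ℂ)⁻¹ • (Rᴴ)⁻¹) := by
    rw [h0]; abel
  have hF : ((Rᴴ)⁻¹ * Hᴴ) * ((Rᴴ)⁻¹ * Hᴴ)ᴴ = 1 - (ρ : ℂ)⁻¹ • ((Rᴴ)⁻¹ * R⁻¹) := by
    rw [Matrix.conjTranspose_mul, Matrix.conjTranspose_conjTranspose, hGH,
      ← Matrix.mul_assoc, h0, Matrix.sub_mul, hRi, Matrix.smul_mul]
  have hc : star ((ρ : ℂ)⁻¹) = (ρ : ℂ)⁻¹ := by simp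
  have hE : ((Rᴴ)⁻¹ * Hᴴ * H - R) * ((Rᴴ)⁻¹ * Hᴴ * H - R)ᴴ
      = ((ρ : ℂ)⁻¹ * (ρ : ℂ)⁻¹) • ((Rᴴ)⁻¹ * R⁻¹) := by
    rw [h1, Matrix.conjTranspose_neg, Matrix.conjTranspose_smul, hGH, hc, neg_mul_neg,
      Matrix.smul_mul, Matrix.mul_smul, smul_smul]
  have h2 : (ρ : ℂ) • (((Rᴴ)⁻¹ * Hᴴ * H - R) * ((Rᴴ)⁻¹ * Hᴴ * H - R)ᴴ) +
        ((Rᴴ)⁻¹ * Hᴴ) * ((Rᴴ)⁻¹ * Hᴴ)ᴴ = 1 := by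
    rw [hE, hF, smul_smul, mul_inv_cancel_left₀ hρ0]
    abel
  refine ⟨h1, h2, ?_⟩
  have hsw : (σs : ℂ) ^ 2 = (σw : ℂ) ^ 2 * (ρ : ℂ) := by
    rw [hρ']; field_simp
  rw [hsw, mul_smul, ← smul_add, h2]
end

section
/- Let Λ ⊂ ℂ^m be a full-rank lattice, let σ_s, σ_w > 0 and ρ = σ_s²/σ_w², let H ∈ ℂ^{n×m}, and let R ∈ ℂ^{m×m} be invertible with R†R = H†H + ρ^{-1}I_m; set F = R^{-†}H†. Then for every t ∈ ℂ^m, (∑_{x∈Λ} exp(−‖x‖²/σ_s² + Re(t†(FH−R)x))) · exp(σ_w²‖F†t‖²/4) ≤ exp(σ_w²‖t‖²/4) · ∑_{x∈Λ} exp(−‖x‖²/σ_s²). (This expresses that the equivalent noise w' = (FH−R)x + Fw, with x drawn from the discrete Gaussian D_{Λ,σ_s} and w an independent circularly-symmetric complex Gaussian of variance σ_w² per entry, is sub-Gaussian with parameter σ_w.) -/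
open Matrix

lemma ennreal_amgm (a b : ENNReal) : 2 * (a * b) ≤ a * a + b * b := by
  by_cases ha : a = ⊤
  · subst ha; simp
  by_cases hb : b = ⊤
  · subst hb; simp
  lift a to NNReal using ha
  lift b to NNReal using hb
  norm_cast
  rw [← NNReal.coe_le_coe]
  push_cast
  nlinarith [sq_nonneg ((a:ℝ) - b)]

/-- fibre sums modulo doubling -/
lemma coset_sum {L : Type*} [AddCommGroup L] (hinj : Function.Injective (fun y : L => y + y))
    (A B : L → ENNReal) :
    ∑' u, ∑' y, A u * B (u - (y + y)) =
      ∑' d : L ⧸ (AddMonoidHom.range (AddMonoidHom.id L + AddMonoidHom.id L)), 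
        (∑' u, {u : L | (u : L ⧸ (AddMonoidHom.range (AddMonoidHom.id L + AddMonoidHom.id L))) = d}.indicator A u) *
        (∑' u, {u : L | (u : L ⧸ (AddMonoidHom.range (AddMonoidHom.id L + AddMonoidHom.id L))) = d}.indicator B u) := by
  classical
  simp_rw [← ENNReal.tsum_mul_right, ← ENNReal.tsum_mul_left]
  rw [ENNReal.tsum_comm]
  conv_rhs => rw [ENNReal.tsum_comm]
  rw [ENNReal.tsum_comm]
  refine tsum_congr fun u => ?_
  rw [ENNReal.tsum_comm]
  set N := AddMonoidHom.range (AddMonoidHom.id L + AddMonoidHom.id L) with hN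
  have h1 : ∀ v : L, (∑' d : L ⧸ N, {u : L | (u : L ⧸ N) = d}.indicator A u *
      {u : L | (u : L ⧸ N) = d}.indicator B v) = if (u : L ⧸ N) = (v : L ⧸ N) then A u * B v else 0 := by
    intro v
    rw [tsum_eq_single (u : L ⧸ N)]
    · simp [Set.indicator_apply, eq_comm]
    · intro d hd
      simp [Set.indicator_apply, hd.symm]
  simp_rw [h1]
  have hi : Function.Injective (fun y : L => u - (y + y)) := by
    intro a b h
    exact hinj (by simpa using h)
  conv_rhs => rw [← hi.tsum_eq (by
    intro v hv
    simp only [Function.mem_support, ne_eq, ite_eq_right_iff, Classical.not_imp] at hv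
    have := hv.1
    rw [QuotientAddGroup.eq] at this
    obtain ⟨y, hy⟩ := this
    refine ⟨-y, ?_⟩
    simp at hy ⊢
    rw [← neg_add_rev, hy]; abel)]
  · refine tsum_congr fun y => ?_
    rw [if_pos]
    rw [QuotientAddGroup.eq]
    exact ⟨-y, by simp; abel⟩

lemma coset_amgm {L : Type*} [AddCommGroup L] (hinj : Function.Injective (fun y : L => y + y))
    (A B : L → ENNReal) :
    2 * ∑' u, ∑' y, A u * B (u - (y + y)) ≤
      ∑' u, ∑' y, A u * A (u - (y + y)) + ∑' u, ∑' y, B u * B (u - (y + y)) := by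
  simp_rw [coset_sum hinj]
  rw [← ENNReal.tsum_mul_left, ← ENNReal.tsum_add]
  exact ENNReal.tsum_le_tsum fun d => ennreal_amgm _ _

noncomputable def gsum {E : Type*} [NormedAddCommGroup E] (L : Submodule ℤ E) (k : ℝ) (c : E) :
    ENNReal := ∑' x : L, ENNReal.ofReal (Real.exp (-k * ‖(x : E) - c‖ ^ 2))

lemma gsum_key {E : Type*} [NormedAddCommGroup E] [NormedSpace ℝ E] (L : Submodule ℤ E)
    (hpar : ∀ x y : E, ‖x + y‖ ^ 2 + ‖x - y‖ ^ 2 = 2 * (‖x‖ ^ 2 + ‖y‖ ^ 2))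
    (k : ℝ) (a b : E) :
    ∑' u : L, ∑' y : L, ENNReal.ofReal (Real.exp (-(k / 2) * ‖(u : E) - (a + b)‖ ^ 2)) *
      ENNReal.ofReal (Real.exp (-(k / 2) * ‖((u - (y + y) : L) : E) - (a - b)‖ ^ 2)) =
    gsum L k a * gsum L k b := by
  rw [ENNReal.tsum_comm, gsum, gsum, ← ENNReal.tsum_mul_left]
  refine tsum_congr fun y => ?_
  rw [← ENNReal.tsum_mul_right, ← (Equiv.addRight y).tsum_eq]
  refine tsum_congr fun x => ?_
  rw [← ENNReal.ofReal_mul (Real.exp_nonneg _), ← ENNReal.ofReal_mul (Real.exp_nonneg _),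
    ← Real.exp_add, ← Real.exp_add]
  congr 2
  have := hpar ((x : E) - a) ((y : E) - b)
  simp only [Equiv.coe_addRight, Submodule.coe_add, Submodule.coe_sub]
  rw [show (x : E) + y - (a + b) = (x - a) + (y - b) by abel,
    show (x : E) + y - (y + y) - (a - b) = (x - a) - (y - b) by abel]
  linear_combination (-k / 2) * this

lemma gsum_ineq {E : Type*} [NormedAddCommGroup E] [NormedSpace ℝ E] (L : Submodule ℤ E)
    (hpar : ∀ x y : E, ‖x + y‖ ^ 2 + ‖x - y‖ ^ 2 = 2 * (‖x‖ ^ 2 + ‖y‖ ^ 2))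
    (k : ℝ) (c : E) :
    2 * (gsum L k c * gsum L k c) ≤
      gsum L k (c + c) * gsum L k 0 + gsum L k 0 * gsum L k 0 := by
  have hinj : Function.Injective (fun y : L => y + y) := by
    intro x y h
    have h' : (x : E) + x = y + y := by exact_mod_cast congrArg Subtype.val h
    rw [← two_smul ℝ, ← two_smul ℝ] at h'
    exact Subtype.ext (smul_right_injective E (two_ne_zero (α := ℝ)) h')
  have h := coset_amgm hinj
    (fun u : L => ENNReal.ofReal (Real.exp (-(k / 2) * ‖(u : E) - (c + c)‖ ^ 2)))
    (fun u : L => ENNReal.ofReal (Real.exp (-(k / 2) * ‖(u : E) - 0‖ ^ 2)))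
  have h1 := gsum_key L hpar k c c
  have h2 := gsum_key L hpar k (c + c) 0
  have h3 := gsum_key L hpar k 0 0
  simp only [sub_self, add_zero] at h1 h2 h3 h
  rw [sub_zero] at h2
  rw [h1, h2, h3] at h
  exact h

lemma summable_gauss_s5 {E : Type*} [NormedAddCommGroup E] [NormedSpace ℝ E] [FiniteDimensional ℝ E]
    (L : Submodule ℤ E) [DiscreteTopology L] (k : ℝ) (hk : 0 < k) :
    Summable fun x : L => Real.exp (-k * ‖(x : E)‖ ^ 2) := by
  set n := Module.finrank ℤ L + 1 with hn
  have h := ZLattice.summable_norm_pow_inv L (2 * n) (by omega)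
  rw [← summable_norm_iff] at h ⊢
  have h2 := (h.mul_left ((n.factorial : ℝ) / k ^ n))
  refine Summable.of_norm_bounded_eventually h2 ?_
  have : {(0 : L)}ᶜ ∈ (Filter.cofinite : Filter L) := by simp
  filter_upwards [this] with x hx
  have hx0 : 0 < ‖x‖ := norm_pos_iff.mpr hx
  have hb := Real.pow_div_factorial_le_exp (k * ‖x‖ ^ 2) (by positivity) n
  rw [show (‖(x : E)‖ : ℝ) = ‖x‖ from rfl, norm_norm, Real.norm_of_nonneg (Real.exp_nonneg _),
    Real.norm_of_nonneg (by positivity), neg_mul, Real.exp_neg]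
  refine (inv_anti₀ (by positivity) hb).trans (le_of_eq ?_)
  rw [mul_pow, ← pow_mul, inv_pow]
  field_simp

lemma gsum_zero_ne_top {E : Type*} [NormedAddCommGroup E] [NormedSpace ℝ E]
    [FiniteDimensional ℝ E]
    (L : Submodule ℤ E) [DiscreteTopology L] (k : ℝ) (hk : 0 < k) : gsum L k 0 ≠ ⊤ := by
  rw [gsum]
  simp only [sub_zero]
  exact (summable_gauss_s5 L k hk).tsum_ofReal_ne_top

lemma gsum_bounded {E : Type*} [NormedAddCommGroup E] [NormedSpace ℝ E] [FiniteDimensional ℝ E]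
    (L : Submodule ℤ E) [DiscreteTopology L] (hfull : Submodule.span ℝ (L : Set E) = ⊤)
    (k : ℝ) (hk : 0 < k) : ∃ C : ENNReal, C ≠ ⊤ ∧ ∀ c, gsum L k c ≤ C := by
  have : IsZLattice ℝ L := ⟨hfull⟩
  have : Module.Finite ℤ L := ZLattice.module_finite ℝ L
  have : Module.Free ℤ L := ZLattice.module_free ℝ L
  let b0 := Module.Free.chooseBasis ℤ L
  let b := b0.ofZLatticeBasis ℝ
  have hb : Submodule.span ℤ (Set.range b) = L := b0.ofZLatticeBasis_span ℝ
  set D := ∑ i, ‖b i‖ with hD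
  refine ⟨ENNReal.ofReal (Real.exp (k * D ^ 2)) * gsum L (k / 2) 0,
    ENNReal.mul_ne_top ENNReal.ofReal_ne_top (gsum_zero_ne_top L _ (by positivity)), fun c => ?_⟩
  have hfl : ((ZSpan.floor b c : Submodule.span ℤ (Set.range b)) : E) ∈ L := by
    have := (ZSpan.floor b c).2
    exact hb.le this
  let l : L := ⟨_, hfl⟩
  rw [gsum, gsum, ← ENNReal.tsum_mul_left, ← (Equiv.addRight l).tsum_eq]
  refine ENNReal.tsum_le_tsum fun x => ?_
  rw [← ENNReal.ofReal_mul (Real.exp_nonneg _), ← Real.exp_add]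
  refine ENNReal.ofReal_le_ofReal (Real.exp_le_exp.mpr ?_)
  have hz := ZSpan.norm_fract_le (K := ℝ) b c
  have he : ((Equiv.addRight l x : L) : E) - c = x - ZSpan.fract b c := by
    rw [ZSpan.fract_apply]
    simp only [Equiv.coe_addRight, Submodule.coe_add, l]
    abel
  rw [he, sub_zero]
  have h1 : ‖(x : E)‖ ≤ ‖(x : E) - ZSpan.fract b c‖ + D := by
    have := norm_add_le ((x : E) - ZSpan.fract b c) (ZSpan.fract b c)
    rw [sub_add_cancel] at this
    linarith
  have h2 : ‖(x : E)‖ ^ 2 ≤ 2 * ‖(x : E) - ZSpan.fract b c‖ ^ 2 + 2 * D ^ 2 := by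
    have := pow_le_pow_left₀ (norm_nonneg _) h1 2
    nlinarith [sq_nonneg (‖(x : E) - ZSpan.fract b c‖ - D)]
  nlinarith

lemma gsum_le {E : Type*} [NormedAddCommGroup E] [NormedSpace ℝ E] [FiniteDimensional ℝ E]
    (L : Submodule ℤ E) [DiscreteTopology L] (hfull : Submodule.span ℝ (L : Set E) = ⊤)
    (hpar : ∀ x y : E, ‖x + y‖ ^ 2 + ‖x - y‖ ^ 2 = 2 * (‖x‖ ^ 2 + ‖y‖ ^ 2))
    (k : ℝ) (hk : 0 < k) (c : E) : gsum L k c ≤ gsum L k 0 := by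
  obtain ⟨C, hC, hCb⟩ := gsum_bounded L hfull k hk
  have hfin : ∀ c, gsum L k c ≠ ⊤ := fun c => ne_top_of_le_ne_top hC (hCb c)
  set f : E → ℝ := fun c => (gsum L k c).toReal with hf
  have hf0 : ∀ c, 0 ≤ f c := fun c => ENNReal.toReal_nonneg
  have hineq : ∀ c, 2 * (f c * f c) ≤ f (c + c) * f 0 + f 0 * f 0 := by
    intro c
    have h := ENNReal.toReal_mono (by
      exact ENNReal.add_ne_top.mpr ⟨ENNReal.mul_ne_top (hfin _) (hfin _),
        ENNReal.mul_ne_top (hfin _) (hfin _)⟩) (gsum_ineq L hpar k c)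
    rw [ENNReal.toReal_add (ENNReal.mul_ne_top (hfin _) (hfin _))
      (ENNReal.mul_ne_top (hfin _) (hfin _))] at h
    simpa [ENNReal.toReal_mul] using h
  have hbdd : BddAbove (Set.range f) :=
    ⟨C.toReal, by rintro _ ⟨c, rfl⟩; exact ENNReal.toReal_mono hC (hCb c)⟩
  set M := ⨆ c, f c with hM
  have hle : ∀ c, f c ≤ M := fun c => le_ciSup hbdd c
  have hM0 : 0 ≤ M := (hf0 0).trans (hle 0)
  have hMM : M ≤ Real.sqrt ((M * f 0 + f 0 * f 0) / 2) := by
    refine ciSup_le fun c => Real.le_sqrt_of_sq_le ?_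
    have := hineq c
    have := mul_le_mul_of_nonneg_right (hle (c + c)) (hf0 0)
    nlinarith
  have h2 : M ^ 2 ≤ (M * f 0 + f 0 * f 0) / 2 := by
    rwa [Real.le_sqrt hM0 (by have := hf0 0; positivity)] at hMM
  have h3 : M ≤ f 0 := by
    by_contra! hlt
    nlinarith [hf0 0]
  exact (ENNReal.toReal_le_toReal (hfin _) (hfin _)).mp ((hle c).trans h3)

lemma gauss_real_le {E : Type*} [NormedAddCommGroup E] [NormedSpace ℝ E] [FiniteDimensional ℝ E]
    (L : Submodule ℤ E) [DiscreteTopology L] (hfull : Submodule.span ℝ (L : Set E) = ⊤)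
    (hpar : ∀ x y : E, ‖x + y‖ ^ 2 + ‖x - y‖ ^ 2 = 2 * (‖x‖ ^ 2 + ‖y‖ ^ 2))
    (k : ℝ) (hk : 0 < k) (c : E) :
    ∑' x : L, Real.exp (-k * ‖(x : E) - c‖ ^ 2) ≤ ∑' x : L, Real.exp (-k * ‖(x : E)‖ ^ 2) := by
  have h := ENNReal.toReal_mono (gsum_zero_ne_top L k hk) (gsum_le L hfull hpar k hk c)
  rw [gsum, gsum, ENNReal.tsum_toReal_eq (fun _ => ENNReal.ofReal_ne_top),
    ENNReal.tsum_toReal_eq (fun _ => ENNReal.ofReal_ne_top)] at h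
  simpa [ENNReal.toReal_ofReal, Real.exp_nonneg] using h

/-- **Sub-Gaussianity of the equivalent noise after MMSE-GDFE filtering.**
Let `Λ ⊂ ℂ^m` be a full-rank lattice, `σ_s, σ_w > 0`, `ρ = σ_s²/σ_w²`,
`H ∈ ℂ^{n×m}`, `R` invertible with `R†R = H†H + ρ⁻¹I`, and `F = R^{-†}H†`. Then for
all `t ∈ ℂ^m`,
`(∑_{x∈Λ} exp(−‖x‖²/σ_s² + Re(t†(FH−R)x))) · exp(σ_w²‖F†t‖²/4)
  ≤ exp(σ_w²‖t‖²/4) · ∑_{x∈Λ} exp(−‖x‖²/σ_s²)`,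
expressing that the equivalent noise `w' = (FH−R)x + Fw` is sub-Gaussian with
parameter `σ_w`. -/
theorem equivalent_noise_subGaussian
    (m n : ℕ)
    (L : Submodule ℤ (EuclideanSpace ℂ (Fin m))) [DiscreteTopology L]
    (hfull : Submodule.span ℝ (L : Set (EuclideanSpace ℂ (Fin m))) = ⊤)
    (σs σw : ℝ) (hσs : 0 < σs) (hσw : 0 < σw)
    (ρ : ℝ) (hρ : ρ = σs ^ 2 / σw ^ 2)
    (H : Matrix (Fin n) (Fin m) ℂ)
    (R : Matrix (Fin m) (Fin m) ℂ) (hR : IsUnit R.det)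
    (hRR : Rᴴ * R = Hᴴ * H + ((ρ : ℂ)⁻¹) • (1 : Matrix (Fin m) (Fin m) ℂ))
    (t : EuclideanSpace ℂ (Fin m)) :
    (∑' x : L, Real.exp (-‖(x : EuclideanSpace ℂ (Fin m))‖ ^ 2 / σs ^ 2 +
          (star (t : Fin m → ℂ) ⬝ᵥ ((Rᴴ)⁻¹ * Hᴴ * H - R) *ᵥ
            ((x : EuclideanSpace ℂ (Fin m)) : Fin m → ℂ)).re)) *
        Real.exp (σw ^ 2 *
          ‖((WithLp.equiv 2 (Fin n → ℂ)).symm (((Rᴴ)⁻¹ * Hᴴ)ᴴ *ᵥ (t : Fin m → ℂ)))‖ ^ 2 / 4) ≤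
      Real.exp (σw ^ 2 * ‖t‖ ^ 2 / 4) *
        ∑' x : L, Real.exp (-‖(x : EuclideanSpace ℂ (Fin m))‖ ^ 2 / σs ^ 2) := by
  have hdetH : IsUnit (Rᴴ).det := by rw [det_conjTranspose]; exact hR.star
  have hρ0 : 0 < ρ := by rw [hρ]; positivity
  have hM : (Rᴴ)⁻¹ * Hᴴ * H - R = -((ρ : ℂ)⁻¹ • (Rᴴ)⁻¹) := by
    have e1 : Hᴴ * H = Rᴴ * R - ((ρ : ℂ)⁻¹) • (1 : Matrix (Fin m) (Fin m) ℂ) := by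
      rw [hRR]; abel
    rw [Matrix.mul_assoc, e1, Matrix.mul_sub, ← Matrix.mul_assoc, nonsing_inv_mul _ hdetH]
    simp
  have hFt : ((Rᴴ)⁻¹ * Hᴴ)ᴴ = H * R⁻¹ := by
    rw [conjTranspose_mul, conjTranspose_nonsing_inv]; simp
  set z : Fin m → ℂ := R⁻¹ *ᵥ (t : Fin m → ℂ) with hz
  have hRz : R *ᵥ z = (t : Fin m → ℂ) := by
    rw [hz, mulVec_mulVec, mul_nonsing_inv _ hR, one_mulVec]
  have hnorm : ∀ (p : ℕ) (v : Fin p → ℂ),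
      ‖(WithLp.toLp 2 v : EuclideanSpace ℂ (Fin p))‖ ^ 2 = (star v ⬝ᵥ v).re := by
    intro p v
    rw [EuclideanSpace.norm_sq_eq, dotProduct, Complex.re_sum]
    refine Finset.sum_congr rfl fun i _ => ?_
    simp [Complex.sq_norm, Complex.normSq_apply]
  have hnt : ‖t‖ ^ 2 = ‖(WithLp.toLp 2 (H *ᵥ z) : EuclideanSpace ℂ (Fin n))‖ ^ 2 +
      ρ⁻¹ * ‖(WithLp.toLp 2 z : EuclideanSpace ℂ (Fin m))‖ ^ 2 := by
    have e0 : ‖t‖ ^ 2 = (star (R *ᵥ z) ⬝ᵥ (R *ᵥ z)).re := by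
      rw [hRz, ← hnorm]
    have e1 : ∀ (p : ℕ) (A : Matrix (Fin p) (Fin m) ℂ),
        star (A *ᵥ z) ⬝ᵥ (A *ᵥ z) = star z ⬝ᵥ ((Aᴴ * A) *ᵥ z) := by
      intro p A
      rw [star_mulVec, ← dotProduct_mulVec, mulVec_mulVec]
    rw [e0, hnorm, hnorm, e1, e1, hRR, add_mulVec, dotProduct_add, Complex.add_re, smul_mulVec,
      one_mulVec, dotProduct_smul, smul_eq_mul, ← Complex.ofReal_inv, Complex.re_ofReal_mul]
  set Z : EuclideanSpace ℂ (Fin m) := WithLp.toLp 2 z with hZ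
  have hlin : ∀ x : EuclideanSpace ℂ (Fin m),
      (star (t : Fin m → ℂ) ⬝ᵥ ((Rᴴ)⁻¹ * Hᴴ * H - R) *ᵥ (x : Fin m → ℂ)).re =
        -(ρ⁻¹ * (inner ℂ Z x).re) := by
    intro x
    have e2 : inner ℂ Z x = star z ⬝ᵥ (x : Fin m → ℂ) := by
      rw [EuclideanSpace.inner_eq_star_dotProduct, dotProduct_comm]
    have e3 : star (t : Fin m → ℂ) ⬝ᵥ (Rᴴ)⁻¹ *ᵥ (x : Fin m → ℂ) = star z ⬝ᵥ (x : Fin m → ℂ) := by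
      rw [hz, star_mulVec, conjTranspose_nonsing_inv, dotProduct_mulVec]
    rw [hM, e2, neg_mulVec, dotProduct_neg, smul_mulVec, dotProduct_smul, e3, smul_eq_mul,
      Complex.neg_re, ← Complex.ofReal_inv, Complex.re_ofReal_mul]
  have hpar : ∀ x y : EuclideanSpace ℂ (Fin m),
      ‖x + y‖ ^ 2 + ‖x - y‖ ^ 2 = 2 * (‖x‖ ^ 2 + ‖y‖ ^ 2) := by
    intro x y
    have := parallelogram_law_with_norm ℂ x y
    simpa [pow_two] using this
  have hmain := gauss_real_le L hfull hpar (1 / σs ^ 2) (by positivity)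
    ((-(σw ^ 2 / 2 : ℝ) : ℂ) • Z)
  have hexp : ∀ x : EuclideanSpace ℂ (Fin m),
      -‖x‖ ^ 2 / σs ^ 2 + (star (t : Fin m → ℂ) ⬝ᵥ ((Rᴴ)⁻¹ * Hᴴ * H - R) *ᵥ (x : Fin m → ℂ)).re =
      σw ^ 2 * ρ⁻¹ * ‖Z‖ ^ 2 / 4 +
        -(1 / σs ^ 2) * ‖x - (-(σw ^ 2 / 2 : ℝ) : ℂ) • Z‖ ^ 2 := by
    intro x
    have e4 : ‖x - (-(σw ^ 2 / 2 : ℝ) : ℂ) • Z‖ ^ 2 =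
        ‖x‖ ^ 2 + σw ^ 2 * (inner ℂ Z x).re + (σw ^ 2 / 2) ^ 2 * ‖Z‖ ^ 2 := by
      rw [neg_smul, sub_neg_eq_add, @norm_add_sq ℂ, inner_smul_right, norm_smul, mul_pow,
        Complex.norm_real, Real.norm_of_nonneg (by positivity : (0 : ℝ) ≤ σw ^ 2 / 2),
        ← inner_conj_symm x Z]
      simp only [RCLike.re_to_complex, Complex.re_ofReal_mul, Complex.conj_re]
      ring
    rw [hlin, e4, hρ]
    field_simp
    ring
  have hx1 : ∀ x : L, Real.exp (-‖(x : EuclideanSpace ℂ (Fin m))‖ ^ 2 / σs ^ 2 +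
          (star (t : Fin m → ℂ) ⬝ᵥ ((Rᴴ)⁻¹ * Hᴴ * H - R) *ᵥ
            ((x : EuclideanSpace ℂ (Fin m)) : Fin m → ℂ)).re) =
      Real.exp (σw ^ 2 * ρ⁻¹ * ‖Z‖ ^ 2 / 4) * Real.exp (-(1 / σs ^ 2) *
        ‖(x : EuclideanSpace ℂ (Fin m)) - (-(σw ^ 2 / 2 : ℝ) : ℂ) • Z‖ ^ 2) := by
    intro x
    rw [hexp, Real.exp_add]
  have hx2 : ∀ x : L, Real.exp (-‖(x : EuclideanSpace ℂ (Fin m))‖ ^ 2 / σs ^ 2) =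
      Real.exp (-(1 / σs ^ 2) * ‖(x : EuclideanSpace ℂ (Fin m))‖ ^ 2) := by
    intro x
    congr 1
    ring
  have hF : (WithLp.equiv 2 (Fin n → ℂ)).symm (((Rᴴ)⁻¹ * Hᴴ)ᴴ *ᵥ (t : Fin m → ℂ)) =
      WithLp.toLp 2 (H *ᵥ z) := by
    rw [hFt, hz, mulVec_mulVec]; rfl
  rw [tsum_congr hx1, tsum_congr hx2, tsum_mul_left, hF, hnt]
  rw [show σw ^ 2 * (‖(WithLp.toLp 2 (H *ᵥ z) : EuclideanSpace ℂ (Fin n))‖ ^ 2 +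
      ρ⁻¹ * ‖Z‖ ^ 2) / 4 = σw ^ 2 * ρ⁻¹ * ‖Z‖ ^ 2 / 4 +
      σw ^ 2 * ‖(WithLp.toLp 2 (H *ᵥ z) : EuclideanSpace ℂ (Fin n))‖ ^ 2 / 4 by ring, Real.exp_add]
  rw [mul_right_comm]
  exact mul_le_mul_of_nonneg_left hmain (by positivity)
end
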